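/- Let N ≥ M ≥ 2 and consider the team reward R(A) = (1/M) Σ_{j=1}^M max_{i} r_{ij} over admissible allocations. Then the supremum of R over admissible homogeneous allocations equals 1/M, the supremum over all admissible allocations equals 1, and hence the heterogeneity gain is ΔR = (M − 1)/M. -/

import Mathlib

open Finset

/-- An N×M allocation matrix is admissible if all entries are nonnegative and
every agent's (row's) efforts sum to 1. -/
def Admissible {N M : ℕ} (A : Fin N → Fin M → ℝ) : Prop :=
  (∀ i j, 0 ≤ A i j) ∧ ∀ i, ∑ j, A i j = 1

/-- An allocation is homogeneous if all rows coincide. -/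
def Homogeneous {N M : ℕ} (A : Fin N → Fin M → ℝ) : Prop :=
  ∀ i i' : Fin N, A i = A i'

/-- The column of task `j`. -/
def col {N M : ℕ} (A : Fin N → Fin M → ℝ) (j : Fin M) : Fin N → ℝ :=
  fun i => A i j

theorem Admissible.le_one {N M : ℕ} {A : Fin N → Fin M → ℝ} (hA : Admissible A)
    (i : Fin N) (j : Fin M) : A i j ≤ 1 :=
  (single_le_sum (fun k _ => hA.1 i k) (mem_univ j)).trans_eq (hA.2 i)

/-- The total task score of a homogeneous admissible allocation is the sum of a single row. -/
theorem Admissible.sum_iSup_of_homogeneous {N M : ℕ} {A : Fin N → Fin M → ℝ}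
    (hA : Admissible A) (hH : Homogeneous A) (i₀ : Fin N) : ∑ j, ⨆ i, A i j = 1 := by
  have : Nonempty (Fin N) := ⟨i₀⟩
  rw [← hA.2 i₀]
  refine sum_congr rfl fun j _ => ?_
  simp only [fun i => hH i i₀, ciSup_const]

theorem Admissible.sum_iSup_le {N M : ℕ} {A : Fin N → Fin M → ℝ}
    (hA : Admissible A) (i₀ : Fin N) : ∑ j, ⨆ i, A i j ≤ M := by
  have : Nonempty (Fin N) := ⟨i₀⟩
  calc ∑ j, ⨆ i, A i j ≤ ∑ _j : Fin M, (1 : ℝ) :=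
        sum_le_sum fun j _ => ciSup_le fun i => hA.le_one i j
    _ = M := by simp

/-- If every agent puts all its effort into one task, the allocation is admissible. -/
theorem admissible_single {N M : ℕ} (f : Fin N → Fin M) :
    Admissible fun i j => if j = f i then (1 : ℝ) else 0 :=
  ⟨fun i j => by dsimp only; split_ifs <;> norm_num, fun i => by simp⟩

/-- If every task is some agent's sole task, each task score is `1`. -/
theorem sum_iSup_single {N M : ℕ} {f : Fin N → Fin M} (hf : Function.Surjective f) :
    ∑ j, ⨆ i, (if j = f i then (1 : ℝ) else 0) = M := by
  have h (j : Fin M) : ⨆ i, (if j = f i then (1 : ℝ) else 0) = 1 := by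
    obtain ⟨i, hi⟩ := hf j
    have : Nonempty (Fin N) := ⟨i⟩
    refine le_antisymm (ciSup_le fun k => by split_ifs <;> norm_num) ?_
    exact (if_pos hi.symm).ge.trans
      (le_ciSup (f := fun i => if j = f i then (1 : ℝ) else 0) (Set.finite_range _).bddAbove i)
  simp [h]

/-- `U = mean`, `T = max`, continuous allocations: for
`N ≥ M ≥ 2`, the best homogeneous reward is `1/M`, the best overall reward is `1`,
and the heterogeneity gain is `ΔR = (M − 1)/M`. -/
theorem stmt11 {N M : ℕ} (hM : 2 ≤ M) (hNM : M ≤ N) :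
    IsGreatest {r : ℝ | ∃ A : Fin N → Fin M → ℝ,
        Admissible A ∧ Homogeneous A ∧ (∑ j, ⨆ i, A i j) / M = r} (1 / M) ∧
    IsGreatest {r : ℝ | ∃ A : Fin N → Fin M → ℝ,
        Admissible A ∧ (∑ j, ⨆ i, A i j) / M = r} 1 ∧
    sSup {r : ℝ | ∃ A : Fin N → Fin M → ℝ,
        Admissible A ∧ (∑ j, ⨆ i, A i j) / M = r} -
      sSup {r : ℝ | ∃ A : Fin N → Fin M → ℝ,
        Admissible A ∧ Homogeneous A ∧ (∑ j, ⨆ i, A i j) / M = r} = ((M : ℝ) - 1) / M := by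
  have hM0 : (0 : ℝ) < M := by exact_mod_cast (by omega : 0 < M)
  have i₀ : Fin N := ⟨0, by omega⟩
  have j₀ : Fin M := ⟨0, by omega⟩
  have hhom : IsGreatest {r : ℝ | ∃ A : Fin N → Fin M → ℝ,
      Admissible A ∧ Homogeneous A ∧ (∑ j, ⨆ i, A i j) / M = r} (1 / M) := by
    constructor
    · have hA := admissible_single fun _ : Fin N => j₀
      have hH : Homogeneous fun (_ : Fin N) j => if j = j₀ then (1 : ℝ) else 0 := fun _ _ => rfl
      exact ⟨_, hA, hH, by rw [hA.sum_iSup_of_homogeneous hH i₀]⟩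
    · rintro r ⟨A, hA, hH, rfl⟩
      rw [hA.sum_iSup_of_homogeneous hH i₀]
  have hhet : IsGreatest {r : ℝ | ∃ A : Fin N → Fin M → ℝ,
      Admissible A ∧ (∑ j, ⨆ i, A i j) / M = r} 1 := by
    constructor
    · have : Nonempty (Fin M) := ⟨j₀⟩
      have hf := Function.invFun_surjective (Fin.castLE_injective hNM)
      exact ⟨_, admissible_single _, by rw [sum_iSup_single hf, div_self hM0.ne']⟩
    · rintro r ⟨A, hA, rfl⟩
      exact (div_le_one hM0).2 (hA.sum_iSup_le i₀)
  refine ⟨hhom, hhet, ?_⟩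
  rw [hhet.csSup_eq, hhom.csSup_eq, sub_div, div_self hM0.ne']
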